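/- For every fixed integer β ≥ 2, a Shilla distance-regular graph Γ with b(Γ) = β has valency k < 4β¹⁰. Consequently there are only finitely many Shilla distance-regular graphs with b(Γ) = β. -/

import Mathlib

open Finset SimpleGraph

/-- `G` is a distance-regular graph with diameter `D` and intersection numbers
`b i`, `c i`, `a i` (so valency `k = b 0` and `a i = k - b i - c i`). -/
structure IsDRG {V : Type*} [Fintype V] (G : SimpleGraph V) (D : ℕ)
    (b c a : ℕ → ℕ) : Prop where
  connected : G.Connected
  le_diam : ∀ x y : V, G.dist x y ≤ D
  exists_diam : ∃ x y : V, G.dist x y = D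
  card_b : ∀ i, i ≤ D → ∀ x y : V, G.dist x y = i →
      Nat.card {z : V | G.Adj y z ∧ G.dist x z = i + 1} = b i
  card_c : ∀ i, i ≤ D → ∀ x y : V, G.dist x y = i →
      Nat.card {z : V | G.Adj y z ∧ G.dist x z = i - 1} = c i
  card_a : ∀ i, i ≤ D → ∀ x y : V, G.dist x y = i →
      Nat.card {z : V | G.Adj y z ∧ G.dist x z = i} = a i

/-- `θ` is an eigenvalue of the adjacency matrix of `G`. -/
def IsEig {V : Type*} [Fintype V] [DecidableEq V] (G : SimpleGraph V)
    [DecidableRel G.Adj] (θ : ℝ) : Prop :=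
  ∃ v : V → ℝ, v ≠ 0 ∧ (G.adjMatrix ℝ).mulVec v = θ • v

/-- `θ` is the second largest eigenvalue of `G` (`k` being the largest). -/
def IsSecondLargestEig {V : Type*} [Fintype V] [DecidableEq V] (G : SimpleGraph V)
    [DecidableRel G.Adj] (k θ : ℝ) : Prop :=
  IsEig G θ ∧ θ < k ∧ ∀ η : ℝ, IsEig G η → η ≠ k → η ≤ θ

/-- `θ` is the smallest eigenvalue of `G`. -/
def IsSmallestEig {V : Type*} [Fintype V] [DecidableEq V] (G : SimpleGraph V)
    [DecidableRel G.Adj] (θ : ℝ) : Prop :=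
  IsEig G θ ∧ ∀ η : ℝ, IsEig G η → θ ≤ η

/-- The multiplicity of `θ` as an eigenvalue of the adjacency matrix of `G`. -/
noncomputable def eigMult {V : Type*} [Fintype V] [DecidableEq V] (G : SimpleGraph V)
    [DecidableRel G.Adj] (θ : ℝ) : ℕ :=
  Module.finrank ℝ ↥(Module.End.eigenspace (Matrix.toLin' (G.adjMatrix ℝ)) θ)

/-- A Shilla distance-regular graph: diameter `3` and second largest eigenvalue `a 3`. -/
structure IsShilla {V : Type*} [Fintype V] [DecidableEq V] (G : SimpleGraph V)
    [DecidableRel G.Adj] (b c a : ℕ → ℕ) : Prop where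
  drg : IsDRG G 3 b c a
  second : IsSecondLargestEig G (b 0) ((a 3 : ℝ))

namespace IsDRG

variable {V : Type*} [Fintype V] {G : SimpleGraph V} {D : ℕ} {b c a : ℕ → ℕ}

/-- Summing a function of the distance from `x` over the neighbours of a vertex at
distance `i ≥ 1` from `x`. -/
lemma sum_neighbors [DecidableRel G.Adj] (h : IsDRG G D b c a) (g : ℕ → ℝ) {i : ℕ}
    (hi : 1 ≤ i) (hiD : i ≤ D) {x y : V} (hxy : G.dist x y = i) :
    ∑ z, (if G.Adj y z then g (G.dist x z) else 0)
      = c i * g (i - 1) + a i * g i + b i * g (i + 1) := by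
  have key : ∀ z, (if G.Adj y z then g (G.dist x z) else 0)
      = (if G.Adj y z ∧ G.dist x z = i - 1 then g (i - 1) else 0)
        + (if G.Adj y z ∧ G.dist x z = i then g i else 0)
        + (if G.Adj y z ∧ G.dist x z = i + 1 then g (i + 1) else 0) := by
    intro z
    by_cases hz : G.Adj y z
    · have h1 := h.connected.dist_triangle (u := x) (v := y) (w := z)
      have h2 := h.connected.dist_triangle (u := x) (v := z) (w := y)
      have h3 := dist_eq_one_iff_adj.2 hz
      have h4 := dist_eq_one_iff_adj.2 hz.symm
      obtain h5 | h5 | h5 : G.dist x z = i - 1 ∨ G.dist x z = i ∨ G.dist x z = i + 1 := by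
        omega
      all_goals
        simp only [hz, h5, true_and, if_true]
        repeat rw [if_neg (by omega)]
        simp
    · simp [hz]
  have hb := h.card_b i hiD x y hxy
  have hc := h.card_c i hiD x y hxy
  have ha := h.card_a i hiD x y hxy
  simp only [Nat.card_eq_fintype_card, Set.coe_ofPred, Fintype.card_subtype] at hb hc ha
  simp_rw [key, Finset.sum_add_distrib, ← Finset.sum_filter, Finset.sum_const, hb, hc, ha,
    nsmul_eq_mul]

/-- Summing over the neighbours of the base vertex itself. -/
lemma sum_neighbors_self [DecidableRel G.Adj] (h : IsDRG G D b c a) (g : ℕ → ℝ) (x : V) :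
    ∑ z, (if G.Adj x z then g (G.dist x z) else 0) = b 0 * g 1 := by
  have hb := h.card_b 0 (Nat.zero_le D) x x SimpleGraph.dist_self
  simp only [Nat.card_eq_fintype_card, Set.coe_ofPred, Fintype.card_subtype] at hb
  have key : ∀ z, (if G.Adj x z then g (G.dist x z) else 0)
      = (if G.Adj x z ∧ G.dist x z = 0 + 1 then g 1 else 0) := by
    intro z
    by_cases hz : G.Adj x z
    · simp [hz, dist_eq_one_iff_adj.2 hz]
    · simp [hz]
  simp_rw [key, ← Finset.sum_filter, Finset.sum_const, hb, nsmul_eq_mul]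

lemma sum_neighbors_one [DecidableRel G.Adj] (h : IsDRG G D b c a) (x : V) :
    ∑ z, (if G.Adj x z then (1 : ℝ) else 0) = b 0 := by
  simpa using h.sum_neighbors_self (fun _ => 1) x

/-- The numbers `c i + a i + b i` all equal the valency. -/
lemma add_eq_valency (h : IsDRG G D b c a) {i : ℕ} (hi : 1 ≤ i) (hiD : i ≤ D)
    {x y : V} (hxy : G.dist x y = i) : c i + a i + b i = b 0 := by
  classical
  have h1 := h.sum_neighbors (fun _ => 1) hi hiD hxy
  rw [h.sum_neighbors_one] at h1
  simp only [mul_one] at h1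
  exact_mod_cast h1.symm

lemma exists_geodesic (h : IsDRG G 3 b c a) : ∃ x y z w : V, G.Adj x y ∧ G.Adj y z ∧ G.Adj z w ∧
    G.dist x y = 1 ∧ G.dist x z = 2 ∧ G.dist x w = 3 ∧ G.dist y w = 2 := by
  obtain ⟨x, w, hxw⟩ := h.exists_diam
  obtain ⟨p, hp⟩ := h.connected.exists_walk_length_eq_dist x w
  rw [hxw] at hp
  cases p with
  | nil => simp at hp
  | @cons _ y _ h1 p =>
    cases p with
    | nil => simp at hp
    | @cons _ z _ h2 p =>
      cases p with
      | nil => simp at hp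
      | @cons _ w' _ h3 p =>
        cases p with
        | cons => simp at hp
        | nil =>
          have d1 := dist_eq_one_iff_adj.2 h1
          have d2 := dist_eq_one_iff_adj.2 h2
          have d3 := dist_eq_one_iff_adj.2 h3
          have t1 := h.connected.dist_triangle (u := x) (v := y) (w := z)
          have t2 := h.connected.dist_triangle (u := x) (v := z) (w := w)
          have t3 := h.connected.dist_triangle (u := y) (v := z) (w := w)
          have t4 := h.connected.dist_triangle (u := x) (v := y) (w := w)
          exact ⟨x, y, z, w, h1, h2, h3, d1, by omega, hxw, by omega⟩

lemma c_one (h : IsDRG G 3 b c a) : c 1 = 1 := by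
  obtain ⟨x, y, -, -, hxy, -, -, d, -⟩ := h.exists_geodesic
  rw [← h.card_c 1 (by norm_num) x y d]
  have : {z : V | G.Adj y z ∧ G.dist x z = 1 - 1} = {x} := by
    ext z
    simp only [Set.mem_ofPred_eq, Nat.sub_self, Set.mem_singleton_iff,
      h.connected.dist_eq_zero_iff]
    constructor
    · rintro ⟨-, rfl⟩; rfl
    · rintro rfl; exact ⟨hxy.symm, rfl⟩
  rw [this]; simp

lemma c_pos (h : IsDRG G D b c a) {x y z : V} (hyz : G.Adj y z) {i : ℕ} (hi : i ≤ D)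
    (hy : G.dist x y = i) (hz : G.dist x z = i - 1) : 0 < c i := by
  rw [← h.card_c i hi x y hy, Nat.card_pos_iff]
  exact ⟨⟨z, hyz, hz⟩, inferInstance⟩

lemma b_pos (h : IsDRG G D b c a) {x y z : V} (hyz : G.Adj y z) {i : ℕ} (hi : i ≤ D)
    (hy : G.dist x y = i) (hz : G.dist x z = i + 1) : 0 < b i := by
  rw [← h.card_b i hi x y hy, Nat.card_pos_iff]
  exact ⟨⟨z, hyz, hz⟩, inferInstance⟩

/-- The basic numerical constraints on the intersection numbers in diameter three. -/
lemma intersection_numbers (h : IsDRG G 3 b c a) :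
    c 1 = 1 ∧ 0 < c 2 ∧ 0 < c 3 ∧ 0 < b 0 ∧ 0 < b 2 ∧ b 3 = 0 ∧ 1 + a 1 + b 1 = b 0 ∧
      c 2 + a 2 + b 2 = b 0 ∧ c 3 + a 3 = b 0 ∧ b 2 ≤ b 1 := by
  obtain ⟨x, y, z, w, hxy, hyz, hzw, d1, d2, d3, d4⟩ := h.exists_geodesic
  have hb3 : b 3 = 0 := by
    rw [← h.card_b 3 le_rfl x w d3, Nat.card_eq_zero]
    left
    refine ⟨fun ⟨v, hv⟩ => ?_⟩
    have := h.le_diam x v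
    have := hv.2
    omega
  have e1 := h.add_eq_valency (by norm_num) (by norm_num) d1
  have e2 := h.add_eq_valency (by norm_num) (by norm_num) d2
  have e3 := h.add_eq_valency (by norm_num) (by norm_num) d3
  rw [h.c_one] at e1
  refine ⟨h.c_one, h.c_pos hyz.symm (by norm_num) d2 d1, h.c_pos hzw.symm (by norm_num) d3 d2,
    by omega, h.b_pos hzw (by norm_num) d2 d3, hb3, e1, e2, by omega, ?_⟩
  have hyz' := dist_eq_one_iff_adj.2 hyz
  rw [← h.card_b 2 (by norm_num) x z d2, ← h.card_b 1 (by norm_num) y z hyz']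
  refine Nat.card_mono (Set.toFinite _) fun v hv => ⟨hv.1, ?_⟩
  have t1 := h.connected.dist_triangle (u := x) (v := y) (w := v)
  have t2 := h.connected.dist_triangle (u := y) (v := z) (w := v)
  have := hv.2
  have := dist_eq_one_iff_adj.2 hv.1
  omega

/-- The sum of `f` over the sphere of radius `i` around `x`. -/
noncomputable def sphereSum (G : SimpleGraph V) (x : V) (f : V → ℝ) (i : ℕ) : ℝ :=
  ∑ y, if G.dist x y = i then f y else 0

lemma sum_mul_dist (h : IsDRG G 3 b c a) (f : V → ℝ) (g : ℕ → ℝ) (x : V) :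
    ∑ y, g (G.dist x y) * f y = g 0 * sphereSum G x f 0 + g 1 * sphereSum G x f 1
      + g 2 * sphereSum G x f 2 + g 3 * sphereSum G x f 3 := by
  simp only [sphereSum, Finset.mul_sum, ← Finset.sum_add_distrib]
  refine Finset.sum_congr rfl fun y _ => ?_
  have := h.le_diam x y
  obtain e | e | e | e : G.dist x y = 0 ∨ G.dist x y = 1 ∨ G.dist x y = 2 ∨ G.dist x y = 3 := by
    omega
  all_goals simp [e]

lemma sphereSum_zero (h : IsDRG G D b c a) (f : V → ℝ) (x : V) : sphereSum G x f 0 = f x := by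
  classical
  simp only [sphereSum, h.connected.dist_eq_zero_iff]
  simp

lemma sum_neighbors_dist [DecidableRel G.Adj] (h : IsDRG G 3 b c a) (g : ℕ → ℝ) (x y : V) :
    ∑ z, (if G.Adj y z then g (G.dist x z) else 0)
      = (fun i => if i = 0 then b 0 * g 1 else c i * g (i - 1) + a i * g i + b i * g (i + 1))
        (G.dist x y) := by
  by_cases hxy : G.dist x y = 0
  · obtain rfl := h.connected.dist_eq_zero_iff.1 hxy
    simp [h.sum_neighbors_self]
  · simp only [hxy, if_false]
    exact h.sum_neighbors g (by omega) (h.le_diam x y) rfl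

/-- The three-term recurrence for the sphere sums of an eigenvector. -/
lemma sphereSum_recurrence [DecidableRel G.Adj] (h : IsDRG G 3 b c a) {f : V → ℝ} {θ : ℝ}
    (hf : ∀ y, ∑ z, (if G.Adj y z then f z else 0) = θ * f y) (x : V) :
    sphereSum G x f 1 = θ * f x ∧
    θ * sphereSum G x f 1 = b 0 * f x + a 1 * sphereSum G x f 1 + c 2 * sphereSum G x f 2 ∧
    θ * sphereSum G x f 2 = b 1 * sphereSum G x f 1 + a 2 * sphereSum G x f 2
      + c 3 * sphereSum G x f 3 ∧
    θ * sphereSum G x f 3 = b 2 * sphereSum G x f 2 + a 3 * sphereSum G x f 3 := by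
  have hb3 := h.intersection_numbers.2.2.2.2.2.1
  have key : ∀ g : ℕ → ℝ, θ * ∑ y, g (G.dist x y) * f y
      = b 0 * g 1 * sphereSum G x f 0 + (g 0 + a 1 * g 1 + b 1 * g 2) * sphereSum G x f 1
        + (c 2 * g 1 + a 2 * g 2 + b 2 * g 3) * sphereSum G x f 2
        + (c 3 * g 2 + a 3 * g 3) * sphereSum G x f 3 := by
    intro g
    have hW := h.sum_mul_dist f
      (fun i => if i = 0 then b 0 * g 1 else c i * g (i - 1) + a i * g i + b i * g (i + 1)) x
    simp only [if_true, one_ne_zero, OfNat.ofNat_ne_zero, if_false, Nat.sub_self, Nat.reduceAdd,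
      Nat.reduceSub, hb3, h.c_one, Nat.cast_zero, Nat.cast_one, zero_mul, add_zero, one_mul]
      at hW
    rw [← hW]
    have hN := fun z => h.sum_neighbors_dist g x z
    beta_reduce at hN
    simp_rw [← hN, Finset.mul_sum, Finset.sum_mul]
    rw [Finset.sum_comm]
    refine Finset.sum_congr rfl fun y _ => ?_
    rw [mul_left_comm, ← hf y, Finset.mul_sum]
    refine Finset.sum_congr rfl fun z _ => ?_
    simp only [G.adj_comm z y]
    split_ifs <;> ring
  simp only [fun g : ℕ → ℝ => h.sum_mul_dist f g x, h.sphereSum_zero] at key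
  have k0 := key (fun i => if i = 0 then 1 else 0)
  have k1 := key (fun i => if i = 1 then 1 else 0)
  have k2 := key (fun i => if i = 2 then 1 else 0)
  have k3 := key (fun i => if i = 3 then 1 else 0)
  simp at k0 k1 k2 k3
  exact ⟨by linarith, by linarith, by linarith, by linarith⟩

end IsDRG

namespace IsDRG

variable {V : Type*} [Fintype V] {G : SimpleGraph V} {D : ℕ} {b c a : ℕ → ℕ}

open Classical in
/-- The closed neighbourhood of `y` inside the local graph at `x`. -/
noncomputable def localNbhd (G : SimpleGraph V) (x y : V) : Finset V :=
  {z | G.Adj x z ∧ (z = y ∨ G.Adj y z)}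

lemma mem_localNbhd {x y z : V} : z ∈ localNbhd G x y ↔ G.Adj x z ∧ (z = y ∨ G.Adj y z) := by
  simp [localNbhd]

lemma card_localNbhd (h : IsDRG G 3 b c a) {x y : V} (hxy : G.Adj x y) :
    (localNbhd G x y).card = a 1 + 1 := by
  classical
  have ha := h.card_a 1 (by norm_num) x y (dist_eq_one_iff_adj.2 hxy)
  simp only [Nat.card_eq_fintype_card, Set.coe_ofPred, Fintype.card_subtype] at ha
  rw [← ha, ← Finset.card_insert_of_notMem (a := y) (by simp)]
  congr 1
  ext z
  simp only [mem_localNbhd, dist_eq_one_iff_adj, Finset.mem_insert, Finset.mem_filter,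
    Finset.mem_univ, true_and]
  constructor
  · tauto
  · rintro (rfl | hz)
    · exact ⟨hxy, Or.inl rfl⟩
    · exact ⟨hz.2, Or.inr hz.1⟩

open Classical in
lemma card_localNbhd_inter (h : IsDRG G 3 b c a) {x y y' : V} (hy : G.Adj x y)
    (hy' : G.Adj x y') (hyy' : y' ∉ localNbhd G x y) :
    (localNbhd G x y ∩ localNbhd G x y').card + 1 ≤ c 2 := by
  simp only [mem_localNbhd, hy', true_and, not_or] at hyy'
  have hd : G.dist y y' = 2 := by
    have h1 := h.connected.one_lt_dist_of_ne_of_not_adj (Ne.symm hyy'.1) hyy'.2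
    have h2 := h.connected.dist_triangle (u := y) (v := x) (w := y')
    rw [dist_eq_one_iff_adj.2 hy', dist_eq_one_iff_adj.2 hy.symm] at h2
    omega
  have hc := h.card_c 2 (by norm_num) y y' hd
  simp only [Nat.card_eq_fintype_card, Set.coe_ofPred, Fintype.card_subtype] at hc
  rw [← hc, ← Finset.card_insert_of_notMem (a := x) (by simp [mem_localNbhd])]
  refine Finset.card_le_card fun z hz => ?_
  simp only [Nat.add_one_sub_one, dist_eq_one_iff_adj, Finset.mem_filter, Finset.mem_univ,
    true_and]
  rcases Finset.mem_insert.1 hz with rfl | hz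
  · exact ⟨hy'.symm, hy.symm⟩
  · obtain ⟨⟨-, h1⟩, -, h2⟩ := (Finset.mem_inter.1 hz).imp mem_localNbhd.1 mem_localNbhd.1
    rcases h1 with rfl | h1 <;> rcases h2 with rfl | h2
    · exact absurd rfl hyy'.1
    · exact absurd h2.symm hyy'.2
    · exact absurd h1 hyy'.2
    · exact ⟨h2, h1⟩

open Classical in
lemma card_neighbors (h : IsDRG G D b c a) (x : V) :
    (Finset.univ.filter (G.Adj x)).card = b 0 := by
  have := h.sum_neighbors_one x
  simp only [Finset.sum_boole] at this
  exact_mod_cast this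

open Classical in
/-- Local graphs contain cocliques of size `s + 1` as long as `s (a₁ + 1) < k`; their closed
neighbourhoods pairwise overlap in at most `c₂ - 1` vertices. -/
lemma exists_coclique (h : IsDRG G 3 b c a) (x : V) {s : ℕ} (hs : s * (a 1 + 1) < b 0) :
    ∀ j ≤ s + 1, ∃ T : Finset V, T.card = j ∧ (∀ y ∈ T, G.Adj x y) ∧
      (j : ℝ) * (a 1 + 1) ≤ (T.biUnion (localNbhd G x)).card + j * (j - 1) / 2 * ((c 2 : ℝ) - 1) := by
  intro j
  induction j with
  | zero => exact fun _ => ⟨∅, by simp⟩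
  | succ j ih =>
    intro hj
    obtain ⟨T, hT, hTx, hU⟩ := ih (by omega)
    have hlt : (T.biUnion (localNbhd G x)).card < (Finset.univ.filter (G.Adj x)).card := by
      rw [h.card_neighbors]
      calc _ ≤ T.card * (a 1 + 1) :=
            Finset.card_biUnion_le_card_mul _ _ _ fun y hy => (h.card_localNbhd (hTx y hy)).le
        _ ≤ s * (a 1 + 1) := Nat.mul_le_mul_right _ (by omega)
        _ < _ := hs
    obtain ⟨y, hy, hyU⟩ := Finset.exists_mem_notMem_of_card_lt_card hlt
    replace hy : G.Adj x y := by simpa using hy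
    simp only [Finset.mem_biUnion, not_exists, not_and] at hyU
    have hyT : y ∉ T := fun hyT => hyU y hyT (mem_localNbhd.2 ⟨hy, Or.inl rfl⟩)
    refine ⟨insert y T, by rw [Finset.card_insert_of_notMem hyT, hT], ?_, ?_⟩
    · intro z hz
      rcases Finset.mem_insert.1 hz with rfl | hz
      exacts [hy, hTx z hz]
    · have h1 := Finset.card_union_add_card_inter (localNbhd G x y) (T.biUnion (localNbhd G x))
      rw [h.card_localNbhd hy] at h1
      have h2 : (localNbhd G x y ∩ T.biUnion (localNbhd G x)).card ≤ j * (c 2 - 1) := by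
        rw [Finset.inter_biUnion, ← hT]
        refine Finset.card_biUnion_le_card_mul _ _ _ fun t ht => ?_
        have := h.card_localNbhd_inter (hTx t ht) hy (hyU t ht)
        rw [Finset.inter_comm]
        omega
      have hc2 : 1 ≤ c 2 := h.intersection_numbers.2.1
      rw [Finset.biUnion_insert]
      have h1' : ((localNbhd G x y ∪ T.biUnion (localNbhd G x)).card : ℝ)
          + (localNbhd G x y ∩ T.biUnion (localNbhd G x)).card
          = (a 1 + 1) + (T.biUnion (localNbhd G x)).card := by exact_mod_cast h1
      have h2' : ((localNbhd G x y ∩ T.biUnion (localNbhd G x)).card : ℝ)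
          ≤ j * ((c 2 : ℝ) - 1) := by
        rw [← Nat.cast_one, ← Nat.cast_sub hc2]
        exact_mod_cast h2
      push_cast
      nlinarith

/-- The coclique bound. -/
lemma coclique_bound (h : IsDRG G 3 b c a) {s : ℕ} (hs : s * (a 1 + 1) < b 0) :
    ((s : ℝ) + 1) * (a 1 + 1) ≤ b 0 + (s + 1) * s / 2 * ((c 2 : ℝ) - 1) := by
  classical
  obtain ⟨x, -⟩ := h.exists_diam
  obtain ⟨T, -, -, hU⟩ := h.exists_coclique x hs (s + 1) le_rfl
  have hle : (T.biUnion (localNbhd G x)).card ≤ b 0 := by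
    rw [← h.card_neighbors x]
    refine Finset.card_le_card fun z hz => ?_
    obtain ⟨y, -, hz⟩ := Finset.mem_biUnion.1 hz
    simpa using (mem_localNbhd.1 hz).1
  have hle' : ((T.biUnion (localNbhd G x)).card : ℝ) ≤ b 0 := by exact_mod_cast hle
  push_cast at hU
  rw [add_sub_cancel_right] at hU
  linarith

/-- The number of vertices of a distance-regular graph of diameter three. -/
lemma card_eq (h : IsDRG G 3 b c a) : ∃ k₂ k₃ : ℝ, (Fintype.card V : ℝ) = 1 + b 0 + k₂ + k₃ ∧
    c 2 * k₂ = b 0 * b 1 ∧ c 3 * k₃ = k₂ * b 2 := by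
  classical
  obtain ⟨x, -⟩ := h.exists_diam
  obtain ⟨h1, h2, h3, -⟩ := h.sphereSum_recurrence (f := fun _ => 1) (θ := b 0)
    (fun y => by rw [h.sum_neighbors_one, mul_one]) x
  have hs := h.sum_mul_dist (fun _ => 1) (fun _ => 1) x
  rw [h.sphereSum_zero] at hs
  obtain ⟨-, -, -, -, -, -, e1, e2, -⟩ := h.intersection_numbers
  have e1' : (1 : ℝ) + a 1 + b 1 = b 0 := by exact_mod_cast e1
  have e2' : (c 2 : ℝ) + a 2 + b 2 = b 0 := by exact_mod_cast e2
  simp only [mul_one, one_mul, Finset.sum_const, Finset.card_univ, nsmul_eq_mul] at *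
  rw [h1] at h2 h3 hs
  refine ⟨_, _, hs, ?_, ?_⟩
  · linear_combination -h2 - (b 0 : ℝ) * e1'
  · linear_combination -h2 - h3 - (b 0 : ℝ) * e1' - sphereSum G x (fun _ => 1) 2 * e2'

/-- The number of vertices of a distance-regular graph of diameter three is bounded in terms of
its valency. -/
lemma card_le (h : IsDRG G 3 b c a) : Fintype.card V ≤ 1 + b 0 + b 0 ^ 2 + b 0 ^ 3 := by
  obtain ⟨k₂, k₃, hn, hk₂, hk₃⟩ := h.card_eq
  obtain ⟨hc1, hc2, hc3, hb0, hb2, hb3, e1, e2, e3, hb⟩ := h.intersection_numbers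
  have hc2R : (1 : ℝ) ≤ c 2 := by exact_mod_cast hc2
  have hc3R : (1 : ℝ) ≤ c 3 := by exact_mod_cast hc3
  have hb1R : (b 1 : ℝ) ≤ b 0 := by exact_mod_cast (by omega : b 1 ≤ b 0)
  have hb2R : (b 2 : ℝ) ≤ b 0 := by exact_mod_cast (by omega : b 2 ≤ b 0)
  have aux : ∀ {r s t : ℝ}, 1 ≤ r → 0 ≤ t → r * s = t → 0 ≤ s ∧ s ≤ t := by
    intro r s t hr ht he
    have hs : 0 ≤ s := by
      by_contra! hneg
      nlinarith
    exact ⟨hs, by nlinarith⟩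
  obtain ⟨h2, h2'⟩ := aux hc2R (by positivity) hk₂
  obtain ⟨-, h3'⟩ := aux hc3R (by positivity) hk₃
  have h4 : k₂ ≤ (b 0 : ℝ) ^ 2 := h2'.trans (by rw [sq]; gcongr)
  have h5 : k₃ ≤ (b 0 : ℝ) ^ 3 := h3'.trans (by rw [pow_succ]; gcongr)
  have : (Fintype.card V : ℝ) ≤ 1 + b 0 + b 0 ^ 2 + b 0 ^ 3 := by linarith
  exact_mod_cast this

end IsDRG

/-- If `E` has idempotent multiple `c⁻¹ E`, then its rank is its trace divided by `c`. -/
lemma Matrix.rank_mul_eq_trace_of_mul_self {n : Type*} [Fintype n] [DecidableEq n]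
    {E : Matrix n n ℝ} {c : ℝ} (hc : c ≠ 0) (hE : E * E = c • E) : E.rank * c = E.trace := by
  have hid : IsIdempotentElem (c⁻¹ • E) := by
    rw [IsIdempotentElem, smul_mul_smul_comm, hE, smul_smul]
    congr 1
    field_simp
  have hid' : IsIdempotentElem (c⁻¹ • E).toLin' := by
    rw [IsIdempotentElem, Module.End.mul_eq_comp, ← Matrix.toLin'_mul, hid.eq]
  have htr := (LinearMap.IsIdempotentElem.isProj_range _ hid').trace
  rw [Matrix.trace_toLin'_eq, Matrix.trace_smul, map_smul, LinearMap.range_smul _ _ (inv_ne_zero hc)]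
    at htr
  have : E.rank = Module.finrank ℝ (LinearMap.range E.toLin') := rfl
  rw [this, ← htr, smul_eq_mul]
  field_simp

/-- A rank factorization. -/
lemma Matrix.exists_eq_mul_of_rank {m n : Type*} [Fintype m] [Fintype n] [DecidableEq n]
    (E : Matrix m n ℝ) :
    ∃ (B : Matrix m (Fin E.rank) ℝ) (C : Matrix (Fin E.rank) n ℝ), E = B * C := by
  let e := Module.finBasis ℝ (LinearMap.range E.mulVecLin)
  refine ⟨Matrix.of fun i j => (e j : m → ℝ) i,
    Matrix.of fun j k => e.repr ⟨E.mulVecLin (Pi.single k 1), LinearMap.mem_range_self _ _⟩ j, ?_⟩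
  ext i k
  have h := congrArg (fun v : LinearMap.range E.mulVecLin => (v : m → ℝ) i)
    (e.sum_repr ⟨E.mulVecLin (Pi.single k 1), LinearMap.mem_range_self _ _⟩)
  simp only [Submodule.coe_sum, Submodule.coe_smul, Finset.sum_apply, Pi.smul_apply, smul_eq_mul,
    Matrix.mulVecLin_apply, Matrix.mulVec_single_one, Matrix.col_apply] at h
  rw [Matrix.mul_apply, ← h]
  simp only [Matrix.of_apply, Matrix.mulVecLin_apply, Matrix.mulVec_single_one]
  exact Finset.sum_congr rfl fun j _ => mul_comm _ _

/-- If the entrywise product of `E y z` with `E y z - r E y x E z x` is a nonzero multiple of the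
identity on `T`, then `T` has at most `(rank E) ^ 2` elements. -/
lemma Matrix.card_le_rank_sq {n : Type*} [Fintype n] [DecidableEq n] (E : Matrix n n ℝ)
    (T : Finset n) (x : n) {r t : ℝ} (ht : t ≠ 0)
    (hE : ∀ y ∈ T, ∀ z ∈ T, E y z * (E y z - r * E y x * E z x) = if y = z then t else 0) :
    T.card ≤ E.rank ^ 2 := by
  obtain ⟨B, C, hBC⟩ := E.exists_eq_mul_of_rank
  let P : Matrix T (Fin E.rank × Fin E.rank) ℝ := fun y p => B y p.1 * B y p.2
  let Q : Matrix (Fin E.rank × Fin E.rank) T ℝ :=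
    fun p z => C p.1 z * (C p.2 z - r * C p.2 x * E z x)
  have hPQ : P * Q = t • (1 : Matrix T T ℝ) := by
    ext y z
    have h1 : ∀ w, E y w = ∑ i, B y i * C i w := fun w => by
      conv_lhs => rw [hBC]
      rfl
    have h2 : E y z - r * E y x * E z x
        = ∑ j, B y j * (C j z - r * C j x * E z x) := by
      rw [h1 z, h1 x, Finset.mul_sum, Finset.sum_mul, ← Finset.sum_sub_distrib]
      exact Finset.sum_congr rfl fun j _ => by ring
    have h3 := hE y y.2 z z.2
    rw [h2, h1 z, Finset.sum_mul_sum] at h3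
    have h4 : (P * Q) y z = ∑ i, ∑ j, P y (i, j) * Q (i, j) z :=
      Matrix.mul_apply.trans (Fintype.sum_prod_type _)
    simp only [h4, P, Q, Matrix.smul_apply, Matrix.one_apply, smul_eq_mul, mul_ite, mul_one,
      mul_zero, ← Subtype.coe_inj, ← h3]
    exact Finset.sum_congr rfl fun i _ => Finset.sum_congr rfl fun j _ => by ring
  have hr : (t • (1 : Matrix T T ℝ)).rank = T.card := by
    rw [Matrix.rank_smul_of_mem_nonZeroDivisors _ (mem_nonZeroDivisors_of_ne_zero ht)]
    simp
  rw [← hr, ← hPQ, sq]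
  simpa using (Matrix.rank_mul_le_left P Q).trans (Matrix.rank_le_card_width P)

/-- The estimate for the number of vertices when `a = a₃` is large. -/
lemma card_estimate {β a c₂ b₂ k₂ k₃ : ℝ} (hβ : 2 ≤ β) (ha : 4 * β ^ 9 ≤ a) (hc₂ : 0 < c₂)
    (hco : (β + 1) * (a - β + 1) ≤ β * a + (β + 1) * β / 2 * (c₂ - 1))
    (hk₂ : c₂ * k₂ = β * a * ((β - 1) * (a + 1)))
    (hk₃ : (β - 1) * a * k₃ = k₂ * b₂) (hb₂ : b₂ ≤ (β - 1) * (a + 1)) :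
    1 + β * a + k₂ + k₃ < 2 * β ^ 4 * a := by
  have h7 : (128 : ℝ) ≤ β ^ 7 := by
    calc (128 : ℝ) = 2 ^ 7 := by norm_num
      _ ≤ β ^ 7 := by gcongr
  have hβa : 128 * β ^ 2 ≤ a := by nlinarith [sq_nonneg β]
  have ha8 : 8 ≤ a := by nlinarith
  have ha0 : 0 < a := by linarith
  have hk₂0 : 0 ≤ k₂ := by
    by_contra! hneg
    have h1 := mul_neg_of_pos_of_neg hc₂ hneg
    have h2 : 0 ≤ β * a * ((β - 1) * (a + 1)) := by
      have : 0 ≤ β - 1 := by linarith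
      positivity
    linarith
  have hc : 3 / 2 * a ≤ c₂ * (β * (β + 1)) := by nlinarith
  have h1 : 3 / 2 * a * k₂ ≤ a * (β ^ 2 * (β ^ 2 - 1) * (a + 1)) := by
    calc 3 / 2 * a * k₂ ≤ c₂ * (β * (β + 1)) * k₂ := by gcongr
      _ = c₂ * k₂ * (β * (β + 1)) := by ring
      _ = a * (β ^ 2 * (β ^ 2 - 1) * (a + 1)) := by rw [hk₂]; ring
  have h2 : 3 / 2 * k₂ ≤ β ^ 2 * (β ^ 2 - 1) * (a + 1) := by
    refine le_of_mul_le_mul_left ?_ ha0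
    linarith
  have h0 : 0 ≤ β ^ 2 * (β ^ 2 - 1) := by
    have : 0 ≤ β ^ 2 - 1 := by nlinarith
    positivity
  have h3 : β ^ 2 * (β ^ 2 - 1) * (a + 1) ≤ β ^ 2 * (β ^ 2 - 1) * (9 / 8 * a) := by
    gcongr
    linarith
  have h4 : k₃ ≤ 9 / 8 * k₂ := by
    have hpos : 0 < (β - 1) * a := mul_pos (by linarith) ha0
    refine le_of_mul_le_mul_left ?_ hpos
    calc (β - 1) * a * k₃ = k₂ * b₂ := hk₃
      _ ≤ k₂ * ((β - 1) * (a + 1)) := by gcongr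
      _ ≤ k₂ * ((β - 1) * (9 / 8 * a)) := by
        have : 0 ≤ β - 1 := by linarith
        gcongr
        linarith
      _ = (β - 1) * a * (9 / 8 * k₂) := by ring
  have h5 : k₂ + k₃ ≤ 51 / 32 * (β ^ 2 * (β ^ 2 - 1)) * a := by linarith
  have h6 : 1 + β * a ≤ β ^ 2 * a := by
    have : 2 ≤ β ^ 2 - β := by nlinarith
    nlinarith
  have h8 : 0 < β ^ 4 * a := by positivity
  have h9 : 0 ≤ β ^ 2 * a := by positivity
  nlinarith

namespace IsShilla

variable {V : Type*} [Fintype V] [DecidableEq V] {G : SimpleGraph V} [DecidableRel G.Adj]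
  {b c a : ℕ → ℕ} {β : ℕ}

/-- The valency of a Shilla graph is `(a₃ - a₁) a₃`. -/
lemma valency_eq (h : IsShilla G b c a) (hβ : a 3 = a 1 + β) : b 0 = β * a 3 := by
  obtain ⟨f, hf0, hf⟩ := h.second.1
  obtain ⟨x, hx⟩ := Function.ne_iff.1 hf0
  have hf' : ∀ y, ∑ z, (if G.Adj y z then f z else 0) = a 3 * f y := fun y => by
    have := congrFun hf y
    simpa [Matrix.mulVec, dotProduct, SimpleGraph.adjMatrix_apply] using this
  obtain ⟨h1, h2, -, h4⟩ := h.drg.sphereSum_recurrence hf' x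
  have hb2 : (b 2 : ℝ) ≠ 0 := by exact_mod_cast h.drg.intersection_numbers.2.2.2.2.1.ne'
  have h5 : IsDRG.sphereSum G x f 2 = 0 := by
    rcases mul_eq_zero.1 (show (b 2 : ℝ) * IsDRG.sphereSum G x f 2 = 0 by linarith) with h | h
    exacts [absurd h hb2, h]
  rw [h5, h1] at h2
  have hβ' : (a 3 : ℝ) = a 1 + β := by exact_mod_cast hβ
  have h6 : (b 0 : ℝ) = β * a 3 := by
    refine mul_right_cancel₀ hx ?_
    linear_combination -h2 + (a 3 : ℝ) * f x * hβ'
  exact_mod_cast h6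

/-- The standard sequence of the eigenvalue `a₃`. -/
noncomputable def standardSeq (b c : ℕ → ℕ) (β : ℕ) (i : ℕ) : ℝ :=
  if i = 0 then 1 else if i = 1 then (β : ℝ)⁻¹ else if i = 2 then 0 else -(c 2 / (β * b 2))

/-- The absolute bound and the multiplicity bound: the rank `m` of the idempotent for `a₃`
satisfies `k ≤ m ^ 2` and `m a₃ < n β`. -/
lemma exists_rank_bounds (h : IsShilla G b c a) (hβ : a 3 = a 1 + β) (hβ2 : 2 ≤ β) :
    ∃ m : ℕ, b 0 ≤ m ^ 2 ∧ (m : ℝ) * a 3 ≤ Fintype.card V * β := by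
  obtain ⟨hc1, hc2, hc3, hb0, hb2, hb3, e1, e2, e3, hb⟩ := h.drg.intersection_numbers
  have hk := h.valency_eq hβ
  have hβ0 : (β : ℝ) ≠ 0 := by positivity
  have hb2' : (b 2 : ℝ) ≠ 0 := by positivity
  have hc3' : (c 3 : ℝ) ≠ 0 := by positivity
  have hkR : (b 0 : ℝ) = β * a 3 := by exact_mod_cast hk
  have hβR : (a 3 : ℝ) = a 1 + β := by exact_mod_cast hβ
  set u := standardSeq b c β with hu
  have u0 : u 0 = 1 := by simp [hu, standardSeq]
  have u1 : u 1 = (β : ℝ)⁻¹ := by simp [hu, standardSeq]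
  have u2 : u 2 = 0 := by simp [hu, standardSeq]
  have u3 : u 3 = -(c 2 / (β * b 2)) := by simp [hu, standardSeq]
  set E : Matrix V V ℝ := Matrix.of fun x y => u (G.dist x y)
  have hE : ∀ x y, E x y = u (G.dist x y) := fun _ _ => rfl
  have hEcomm : ∀ x y, E x y = E y x := fun x y => by simp only [hE, G.dist_comm]
  have hAE : ∀ x y, ∑ z, (if G.Adj y z then E x z else 0) = a 3 * E x y := by
    intro x y
    simp only [hE, h.drg.sum_neighbors_dist u x y]
    have := h.drg.le_diam x y
    obtain e | e | e | e : G.dist x y = 0 ∨ G.dist x y = 1 ∨ G.dist x y = 2 ∨ G.dist x y = 3 := by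
      omega
    · simp only [e, if_true, u0, u1, hkR]
      field_simp
    · simp only [e, hc1, u0, u1, u2, one_ne_zero, if_false, Nat.sub_self, Nat.reduceAdd]
      field_simp
      rw [hβR]
      push_cast
      ring
    · simp only [e, u1, u2, u3, OfNat.ofNat_ne_zero, if_false, Nat.reduceSub, Nat.reduceAdd]
      field_simp
      ring
    · simp [e, u2, hb3]
  set t : ℝ := 1 + a 3 / β - u 3 * (b 1 * a 3 / c 3) with ht
  have htpos : (a 3 : ℝ) / β < t := by
    have : 0 ≤ c 2 / (β * b 2 : ℝ) * (b 1 * a 3 / c 3) := by positivity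
    rw [ht, u3]
    linarith
  have hEE : E * E = t • E := by
    ext x y
    obtain ⟨h1, h2, h3, h4⟩ := h.drg.sphereSum_recurrence (hAE y) x
    have s2 : IsDRG.sphereSum G x (E y) 2 = 0 := by
      have : (c 2 : ℝ) ≠ 0 := by positivity
      refine (mul_eq_zero.1 ?_).resolve_left this
      rw [h1] at h2
      linear_combination -h2 - E y x * hkR + E y x * (a 3 : ℝ) * hβR
    have s3 : IsDRG.sphereSum G x (E y) 3 = -(b 1 * a 3 / c 3) * E y x := by
      rw [s2, h1] at h3
      field_simp
      linarith
    have hsum := h.drg.sum_mul_dist (E y) u x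
    rw [h.drg.sphereSum_zero, h1, s2, s3, u0, u1] at hsum
    rw [Matrix.mul_apply, Matrix.smul_apply, smul_eq_mul, hEcomm x y]
    calc ∑ z, E x z * E z y = ∑ z, u (G.dist x z) * E y z :=
          Finset.sum_congr rfl fun z _ => by rw [hEcomm z y, hE x z]
      _ = t * E y x := by rw [hsum, ht]; ring
  have ht0 : 0 < t := lt_of_le_of_lt (by positivity) htpos
  have hrank := Matrix.rank_mul_eq_trace_of_mul_self ht0.ne' hEE
  have htrace : E.trace = Fintype.card V := by
    simp [Matrix.trace, hE, u0]
  refine ⟨E.rank, ?_, ?_⟩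
  · obtain ⟨x, -⟩ := h.drg.exists_diam
    have hcard : (G.neighborFinset x).card = b 0 := by
      rw [← h.drg.card_neighbors x]
      congr 1
      ext z
      simp
    rw [← hcard]
    have hβ1 : (β : ℝ)⁻¹ < 1 := inv_lt_one_of_one_lt₀ (by exact_mod_cast hβ2)
    refine E.card_le_rank_sq _ x (r := β) (t := 1 - (β : ℝ)⁻¹) (by linarith) ?_
    intro y hy z hz
    rw [mem_neighborFinset] at hy hz
    have hyx : E y x = (β : ℝ)⁻¹ := by rw [hE, dist_eq_one_iff_adj.2 hy.symm, u1]
    have hzx : E z x = (β : ℝ)⁻¹ := by rw [hE, dist_eq_one_iff_adj.2 hz.symm, u1]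
    rw [hyx, hzx, mul_inv_cancel₀ hβ0, one_mul]
    split_ifs with hyz
    · subst hyz
      simp [hE, u0]
    · have t1 := h.drg.connected.dist_triangle (u := y) (v := x) (w := z)
      have t2 := h.drg.connected.pos_dist_of_ne hyz
      rw [dist_eq_one_iff_adj.2 hy.symm, dist_eq_one_iff_adj.2 hz] at t1
      obtain e | e : G.dist y z = 1 ∨ G.dist y z = 2 := by omega
      · simp [hE, e, u1]
      · simp [hE, e, u2]
  · rw [htrace] at hrank
    rw [← hrank]
    rw [div_lt_iff₀ (by positivity)] at htpos
    rw [mul_assoc]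
    gcongr

/-- A Shilla graph with `b(Γ) = β` has valency less than `4 β ^ 10`. -/
lemma valency_lt (h : IsShilla G b c a) (hβ : a 3 = a 1 + β) (hβ2 : 2 ≤ β) :
    b 0 < 4 * β ^ 10 := by
  by_contra! hlarge
  obtain ⟨m, hm, hmn⟩ := h.exists_rank_bounds hβ hβ2
  obtain ⟨k₂, k₃, hn, hk₂, hk₃⟩ := h.drg.card_eq
  obtain ⟨hc1, hc2, hc3, hb0, hb2, hb3, e1, e2, e3, hb⟩ := h.drg.intersection_numbers
  have hk := h.valency_eq hβ
  have hkR : (b 0 : ℝ) = β * a 3 := by exact_mod_cast hk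
  have hβR : (a 3 : ℝ) = a 1 + β := by exact_mod_cast hβ
  have hβ_two : (2 : ℝ) ≤ β := by exact_mod_cast hβ2
  have e1R : (1 : ℝ) + a 1 + b 1 = b 0 := by exact_mod_cast e1
  have e3R : (c 3 : ℝ) + a 3 = b 0 := by exact_mod_cast e3
  have hbR : (b 2 : ℝ) ≤ b 1 := by exact_mod_cast hb
  have ha3 : 4 * β ^ 9 ≤ a 3 := by
    refine le_of_mul_le_mul_left (a := β) ?_ (by omega)
    rw [← hk]
    calc _ = 4 * β ^ 10 := by ring
      _ ≤ _ := hlarge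
  have ha3R : (4 : ℝ) * β ^ 9 ≤ a 3 := by exact_mod_cast ha3
  have ha3pos : (0 : ℝ) < a 3 := lt_of_lt_of_le (by positivity) ha3R
  have hs : β * (a 1 + 1) < b 0 := by
    rw [hk]
    exact Nat.mul_lt_mul_of_pos_left (by omega) (by omega)
  have hco := h.drg.coclique_bound hs
  have hb1 : (b 1 : ℝ) = (β - 1) * (a 3 + 1) := by linarith
  have hc3R : (c 3 : ℝ) = (β - 1) * a 3 := by linarith
  have ha1 : (a 1 : ℝ) = a 3 - β := by linarith
  rw [hkR, ha1] at hco
  rw [hkR, hb1] at hk₂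
  rw [hc3R] at hk₃
  rw [hb1] at hbR
  have hest := card_estimate hβ_two ha3R (by exact_mod_cast hc2) hco hk₂ hk₃ hbR
  rw [← hkR, ← hn] at hest
  have hm' : (m : ℝ) < 2 * β ^ 5 := by
    refine lt_of_mul_lt_mul_right ?_ ha3pos.le
    calc (m : ℝ) * a 3 ≤ Fintype.card V * β := hmn
      _ < 2 * β ^ 4 * a 3 * β := by gcongr
      _ = 2 * β ^ 5 * a 3 := by ring
  have hm'' : m < 2 * β ^ 5 := by exact_mod_cast hm'
  have : m ^ 2 < 4 * β ^ 10 := by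
    calc m ^ 2 < (2 * β ^ 5) ^ 2 := by gcongr
      _ = 4 * β ^ 10 := by ring
  omega

end IsShilla

/-- For fixed `β ≥ 2`, a Shilla distance-regular graph with `b(Γ) = β` has valency
`k < 4β¹⁰`; consequently there are only finitely many such graphs. -/
theorem stmt8 (β : ℕ) (hβ2 : 2 ≤ β) :
    (∀ (V : Type) [Fintype V] [DecidableEq V] (G : SimpleGraph V) [DecidableRel G.Adj]
        (b c a : ℕ → ℕ), IsShilla G b c a → a 3 = a 1 + β → b 0 < 4 * β ^ 10) ∧
    {n : ℕ | ∃ (G : SimpleGraph (Fin n)) (_ : DecidableRel G.Adj) (b c a : ℕ → ℕ),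
        IsShilla G b c a ∧ a 3 = a 1 + β}.Finite := by
  refine ⟨fun V _ _ G _ b c a h hβ => h.valency_lt hβ hβ2, ?_⟩
  refine (Set.finite_Iic
    (1 + 4 * β ^ 10 + (4 * β ^ 10) ^ 2 + (4 * β ^ 10) ^ 3)).subset ?_
  rintro n ⟨G, _, b, c, a, h, hβ⟩
  have hk := (h.valency_lt hβ hβ2).le
  have hn := h.drg.card_le
  rw [Fintype.card_fin] at hn
  refine Set.mem_Iic.2 (hn.trans ?_)
  gcongr
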